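/- Suppose a group G acts geometrically (properly and cocompactly by isometries) on a CAT(0) space X with fixed basepoint x₀, and the boundary ∂X has more than two points. Then for every pair of boundary points α, β ∈ ∂X with α ≠ β, one has limsup{ d_{∂X}(gα, gβ) : g ∈ G } > 0. -/

import Mathlib

/-!
The bound comes from letting `g⁻¹ x₀` follow the ray `c` from `x₀` to `α`.

If `g x₀` is within `R` of `c n`, then equivariance turns the distance between the rays from `x₀`
to `g⁻¹ α` and `g⁻¹ β` into the distance between the rays from `g x₀` to `α` and `β`. Asymptotic
rays never get further apart than their starting points (`dist_le_of_asymptotic`), so up to `2R`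
this is the distance between `c (n + s)` and the point at time `s` on the ray from `c n` to `β`.
It therefore suffices that this last distance is at least `ε s`, with `ε > 0` independent of `n`
and `s` (`divergence`): for `s` large, `ε s - 2R ≥ 1`, which bounds one term of `bdist` below,
and infinitely many `g` occur because `c n` tends to infinity.

The linear divergence expresses that the angle at `c n` between `α` and `β` does not decrease with
`n` and becomes positive. To avoid angles and Busemann functions, suppose that the distance is
less than `ε s`, and look at a far point `z` on the ray from `x₀` to `β`. Moving from `c n` to
`c (n + s)` brings one closer to `z` at speed at least `1 - 2ε`. The distance to `z` is convex along
`c`, so the speed of approach is at least `1 - 2ε` on all of `[0, n]`, in particular up to a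
fixed time `t₀` at which the two rays from `x₀` differ. The `CAT(0)` inequality in the triangle
`x₀, c t₀, z` then bounds the squared distance of the two rays at time `t₀` by `4 ε t₀²`, which
is impossible when `ε` is small.
-/

/-- `γ` parametrizes a geodesic segment from `x` to `y` by arc length:
it is an isometric embedding of `[0, dist x y]` with `γ 0 = x` and `γ (dist x y) = y`. -/
def IsGeodesicFrom {X : Type*} [MetricSpace X] (γ : ℝ → X) (x y : X) : Prop :=
  γ 0 = x ∧ γ (dist x y) = y ∧
    ∀ s ∈ Set.Icc (0 : ℝ) (dist x y), ∀ t ∈ Set.Icc (0 : ℝ) (dist x y),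
      dist (γ s) (γ t) = |s - t|

/-- A geodesic space: every pair of points is joined by a geodesic. -/
def GeodesicSpace (X : Type*) [MetricSpace X] : Prop :=
  ∀ x y : X, ∃ γ : ℝ → X, IsGeodesicFrom γ x y

/-- The comparison point in the Euclidean plane: the point at arc-length parameter `s`
on the segment from `p` to `q`, where `D` is the length of that segment. -/
noncomputable def cmpPt (p q : EuclideanSpace ℝ (Fin 2)) (D s : ℝ) :
    EuclideanSpace ℝ (Fin 2) :=
  p + (s / D) • (q - p)

/-- A CAT(0) space: a geodesic space in which every geodesic triangle satisfies the
CAT(0) comparison inequality with respect to a comparison triangle in the Euclidean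
plane `ℝ²` with the same side lengths. -/
def CAT0 (X : Type*) [MetricSpace X] : Prop :=
  GeodesicSpace X ∧
    ∀ (p q r : X) (γ γ' : ℝ → X), IsGeodesicFrom γ p q → IsGeodesicFrom γ' p r →
      ∀ pc qc rc : EuclideanSpace ℝ (Fin 2),
        dist pc qc = dist p q → dist pc rc = dist p r → dist qc rc = dist q r →
        ∀ s ∈ Set.Icc (0 : ℝ) (dist p q), ∀ t ∈ Set.Icc (0 : ℝ) (dist p r),
          dist (γ s) (γ' t) ≤ dist (cmpPt pc qc (dist p q) s) (cmpPt pc rc (dist p r) t)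

/-- A geodesic ray: an isometric embedding of `[0, ∞)`. -/
def IsGeodesicRay {X : Type*} [MetricSpace X] (ξ : ℝ → X) : Prop :=
  ∀ s ∈ Set.Ici (0 : ℝ), ∀ t ∈ Set.Ici (0 : ℝ), dist (ξ s) (ξ t) = |s - t|

/-- Two rays are asymptotic if they are at bounded distance from each other. -/
def Asymptotic {X : Type*} [MetricSpace X] (ξ ζ : ℝ → X) : Prop :=
  ∃ C : ℝ, ∀ t ≥ (0 : ℝ), dist (ξ t) (ζ t) ≤ C

/-- The action of `G` on `X` is by isometries. -/
def IsometricAction (G X : Type*) [Group G] [MetricSpace X] [MulAction G X] : Prop :=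
  ∀ (g : G) (x y : X), dist (g • x) (g • y) = dist x y

/-- The action of `G` on `X` is (metrically) proper. -/
def ProperAction (G X : Type*) [Group G] [MetricSpace X] [MulAction G X] : Prop :=
  ∀ (x : X) (R : ℝ), {g : G | dist x (g • x) ≤ R}.Finite

/-- The action of `G` on `X` is cocompact: some (hence any) orbit is coarsely dense. -/
def CocompactAction (G X : Type*) [Group G] [MetricSpace X] [MulAction G X] : Prop :=
  ∀ x : X, ∃ R > (0 : ℝ), ∀ y : X, ∃ g : G, dist y (g • x) ≤ R

/-- A geometric action: proper and cocompact, by isometries. -/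
def GeometricAction (G X : Type*) [Group G] [MetricSpace X] [MulAction G X] : Prop :=
  IsometricAction G X ∧ ProperAction G X ∧ CocompactAction G X

/-- A bundled presentation of the boundary `∂X` of a proper CAT(0) space `X`,
together with the induced action of `G`.  The type `Bd` plays the role of `∂X`:
`ray x α` is the unique geodesic ray issuing from `x` in the asymptotic class `α`,
every geodesic ray is asymptotic to exactly one such ray, and the `G`-action on `Bd`
is the one induced by the action on rays, `g • [ξ] = [g ∘ ξ]`. -/
structure BoundaryStruct (G X Bd : Type*) [Group G] [MetricSpace X]
    [MulAction G X] [MulAction G Bd] where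
  ray : X → Bd → ℝ → X
  isRay : ∀ (x : X) (α : Bd), IsGeodesicRay (ray x α)
  ray_start : ∀ (x : X) (α : Bd), ray x α 0 = x
  ray_asymp : ∀ (x y : X) (α : Bd), Asymptotic (ray x α) (ray y α)
  ray_inj : ∀ (x : X) (α β : Bd), Asymptotic (ray x α) (ray x β) → α = β
  ray_surj : ∀ ξ : ℝ → X, IsGeodesicRay ξ → ∃ α : Bd, Asymptotic ξ (ray (ξ 0) α)
  equivariant : ∀ (g : G) (x : X) (α : Bd) (t : ℝ), g • ray x α t = ray (g • x) (g • α) t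

/-- The metric `d_{∂X}` on the boundary with respect to the basepoint `x₀`:
`d_{∂X}(α,β) = Σ_{i=1}^∞ min { d(ξ_{x₀,α}(i), ξ_{x₀,β}(i)), 2⁻ⁱ }`. -/
noncomputable def bdist {G X Bd : Type*} [Group G] [MetricSpace X]
    [MulAction G X] [MulAction G Bd] (B : BoundaryStruct G X Bd) (x₀ : X)
    (α β : Bd) : ℝ :=
  ∑' i : ℕ, min (dist (B.ray x₀ α (i + 1)) (B.ray x₀ β (i + 1))) ((1 : ℝ) / 2 ^ (i + 1))

/-- The boundary is a scrambled set: for all distinct `α, β ∈ ∂X`,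
`limsup { d_{∂X}(gα, gβ) : g ∈ G } > 0` and `liminf { d_{∂X}(gα, gβ) : g ∈ G } = 0`
(limit superior/inferior being taken along the cofinite filter on `G`). -/
def IsScrambled {G X Bd : Type*} [Group G] [MetricSpace X]
    [MulAction G X] [MulAction G Bd] (B : BoundaryStruct G X Bd) (x₀ : X) : Prop :=
  ∀ α β : Bd, α ≠ β →
    0 < Filter.limsup (fun g : G => bdist B x₀ (g • α) (g • β)) Filter.cofinite ∧
    Filter.liminf (fun g : G => bdist B x₀ (g • α) (g • β)) Filter.cofinite = 0

/-- The boundary has more than two points. -/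
def MoreThanTwo (Bd : Type*) : Prop :=
  ∃ a b c : Bd, a ≠ b ∧ a ≠ c ∧ b ≠ c

/-! ### Euclidean comparison without comparison points -/

/-- Three distances in a metric space are realized by a triangle in the Euclidean plane. -/
lemma exists_comparison {X : Type*} [MetricSpace X] (p q r : X) :
    ∃ pc qc rc : EuclideanSpace ℝ (Fin 2),
      dist pc qc = dist p q ∧ dist pc rc = dist p r ∧ dist qc rc = dist q r := by
  have ha : 0 ≤ dist p q := dist_nonneg
  have hb : 0 ≤ dist p r := dist_nonneg
  have hc : 0 ≤ dist q r := dist_nonneg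
  have h1 : dist p q ≤ dist p r + dist q r := by
    rw [dist_comm q r]; exact dist_triangle p r q
  have h2 : dist p r ≤ dist p q + dist q r := dist_triangle p q r
  have h3 : dist q r ≤ dist p q + dist p r := by
    rw [dist_comm p q]; exact dist_triangle q p r
  rcases ha.eq_or_lt with h0 | h0
  · have hpq : p = q := dist_eq_zero.1 h0.symm
    subst hpq
    refine ⟨!₂[0, 0], !₂[0, 0], !₂[dist p r, 0], by simp, ?_, ?_⟩ <;>
      simp [EuclideanSpace.dist_eq, Fin.sum_univ_two, Real.dist_eq, Real.sqrt_sq]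
  · set a := dist p q
    set b := dist p r
    set c := dist q r
    obtain ⟨x, hx⟩ : ∃ x : ℝ, 2 * a * x = a ^ 2 + b ^ 2 - c ^ 2 :=
      ⟨(a ^ 2 + b ^ 2 - c ^ 2) / (2 * a), by field_simp⟩
    have hxb : |x| ≤ b := by
      rw [abs_le]
      constructor
      · have : 0 ≤ 2 * a * (x + b) := by nlinarith
        have := nonneg_of_mul_nonneg_right this (by positivity)
        linarith
      · have : 0 ≤ 2 * a * (b - x) := by nlinarith
        have := nonneg_of_mul_nonneg_right this (by positivity)
        linarith
    have hy : 0 ≤ b ^ 2 - x ^ 2 := by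
      have := sq_le_sq' (abs_le.1 hxb).1 (abs_le.1 hxb).2
      linarith
    refine ⟨!₂[0, 0], !₂[a, 0], !₂[x, √(b ^ 2 - x ^ 2)], ?_, ?_, ?_⟩
    · simp [EuclideanSpace.dist_eq, Fin.sum_univ_two, Real.dist_eq, Real.sqrt_sq, ha]
    · simp only [EuclideanSpace.dist_eq, Fin.sum_univ_two, Real.dist_eq, sq_abs]
      refine (congrArg _ ?_).trans (Real.sqrt_sq hb)
      simp [Real.sq_sqrt hy]
    · simp only [EuclideanSpace.dist_eq, Fin.sum_univ_two, Real.dist_eq, sq_abs]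
      refine (congrArg _ ?_).trans (Real.sqrt_sq hc)
      simp [Real.sq_sqrt hy]
      linarith

/-- The `CAT(0)` inequality as the law of cosines: points at proportions `l` and `m` along two
sides issuing from `p`. -/
lemma CAT0.dist_sq_le {X : Type*} [MetricSpace X] (hX : CAT0 X) {p q r : X} {γ γ' : ℝ → X}
    (hγ : IsGeodesicFrom γ p q) (hγ' : IsGeodesicFrom γ' p r) {l m : ℝ}
    (hl : l ∈ Set.Icc (0 : ℝ) 1) (hm : m ∈ Set.Icc (0 : ℝ) 1) :
    dist (γ (l * dist p q)) (γ' (m * dist p r)) ^ 2 ≤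
      l ^ 2 * dist p q ^ 2 + m ^ 2 * dist p r ^ 2
        - l * m * (dist p q ^ 2 + dist p r ^ 2 - dist q r ^ 2) := by
  obtain ⟨pc, qc, rc, h1, h2, h3⟩ := exists_comparison p q r
  have key := hX.2 p q r γ γ' hγ hγ' pc qc rc h1 h2 h3 (l * dist p q)
    ⟨mul_nonneg hl.1 dist_nonneg, mul_le_of_le_one_left dist_nonneg hl.2⟩ (m * dist p r)
    ⟨mul_nonneg hm.1 dist_nonneg, mul_le_of_le_one_left dist_nonneg hm.2⟩
  -- The identity also holds for a degenerate side, where `cmpPt` divides by zero.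
  have aux : ∀ (u v : EuclideanSpace ℝ (Fin 2)) (k : ℝ),
      cmpPt u v (dist u v) (k * dist u v) = u + k • (v - u) := by
    intro u v k
    unfold cmpPt
    rcases eq_or_ne (dist u v) 0 with h | h
    · rw [dist_eq_zero.1 h]; simp
    · rw [mul_div_cancel_right₀ _ h]
  rw [← h1, ← h2, aux, aux, dist_add_left, h1, h2] at key
  have key2 := pow_le_pow_left₀ dist_nonneg key 2
  refine key2.trans_eq ?_
  have h4 : dist qc rc = ‖(qc - pc) - (rc - pc)‖ := by rw [dist_eq_norm]; congr 1; abel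
  rw [← h1, ← h2, ← h3, h4, dist_comm pc qc, dist_comm pc rc, dist_eq_norm qc pc,
    dist_eq_norm rc pc, dist_eq_norm]
  generalize qc - pc = u
  generalize rc - pc = v
  rw [norm_sub_sq_real, norm_sub_sq_real, norm_smul, norm_smul, real_inner_smul_left,
    real_inner_smul_right, mul_pow, mul_pow, Real.norm_eq_abs, Real.norm_eq_abs, sq_abs, sq_abs]
  ring

/-- Two sides of a triangle, contracted towards their common vertex by the factor `l`. -/
lemma CAT0.dist_le_mul {X : Type*} [MetricSpace X] (hX : CAT0 X) {p q r : X} {γ γ' : ℝ → X}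
    (hγ : IsGeodesicFrom γ p q) (hγ' : IsGeodesicFrom γ' p r) {l : ℝ}
    (hl : l ∈ Set.Icc (0 : ℝ) 1) :
    dist (γ (l * dist p q)) (γ' (l * dist p r)) ≤ l * dist q r := by
  have h := hX.dist_sq_le hγ hγ' hl hl
  refine le_of_sq_le_sq ?_ (mul_nonneg hl.1 dist_nonneg)
  nlinarith

/-! ### Convexity along geodesic rays -/

lemma IsGeodesicFrom.reverse {X : Type*} [MetricSpace X] {γ : ℝ → X} {x y : X}
    (h : IsGeodesicFrom γ x y) : IsGeodesicFrom (fun t => γ (dist x y - t)) y x := by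
  refine ⟨by simpa using h.2.1, by simpa [dist_comm y x] using h.1, ?_⟩
  intro s hs t ht
  rw [dist_comm y x] at hs ht
  rw [h.2.2 _ ⟨by linarith [hs.2], by linarith [hs.1]⟩ _ ⟨by linarith [ht.2], by linarith [ht.1]⟩,
    abs_sub_comm]
  congr 1
  ring

lemma IsGeodesicRay.dist_zero {X : Type*} [MetricSpace X] {ξ : ℝ → X} (h : IsGeodesicRay ξ)
    {T : ℝ} (hT : 0 ≤ T) : dist (ξ 0) (ξ T) = T := by
  rw [h 0 (by simp) T hT]
  simp [abs_of_nonneg hT]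

lemma IsGeodesicRay.geodesic {X : Type*} [MetricSpace X] {ξ : ℝ → X} (h : IsGeodesicRay ξ)
    {T : ℝ} (hT : 0 ≤ T) : IsGeodesicFrom ξ (ξ 0) (ξ T) :=
  ⟨rfl, by rw [h.dist_zero hT], fun s hs t ht => h s hs.1 t ht.1⟩

/-- The distance to a point is convex along a ray. -/
lemma CAT0.convex_dist {X : Type*} [MetricSpace X] (hX : CAT0 X) {ξ : ℝ → X}
    (h : IsGeodesicRay ξ) (z : X) {s T : ℝ} (hs : 0 ≤ s) (hsT : s ≤ T) (hT : 0 < T) :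
    T * dist (ξ s) z ≤ (T - s) * dist (ξ 0) z + s * dist (ξ T) z := by
  obtain ⟨δ, hδ⟩ := hX.1 (ξ 0) z
  have hl : s / T ∈ Set.Icc (0 : ℝ) 1 := ⟨by positivity, (div_le_one hT).2 hsT⟩
  have h1 := hX.dist_le_mul (h.geodesic hT.le) hδ hl
  rw [h.dist_zero hT.le, div_mul_cancel₀ _ hT.ne'] at h1
  have h2 : dist (δ (s / T * dist (ξ 0) z)) z = (1 - s / T) * dist (ξ 0) z := by
    have h := hδ.2.2 (s / T * dist (ξ 0) z)
      ⟨mul_nonneg hl.1 dist_nonneg, mul_le_of_le_one_left dist_nonneg hl.2⟩ _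
      ⟨dist_nonneg, le_rfl⟩
    rw [hδ.2.1] at h
    rw [h, abs_sub_comm, abs_of_nonneg]
    · ring
    · linarith [mul_le_of_le_one_left (dist_nonneg (x := ξ 0) (y := z)) hl.2]
  have h3 := dist_triangle (ξ s) (δ (s / T * dist (ξ 0) z)) z
  have h4 : dist (ξ s) z ≤ s / T * dist (ξ T) z + (1 - s / T) * dist (ξ 0) z := by linarith
  have h5 := mul_le_mul_of_nonneg_left h4 hT.le
  refine h5.trans_eq ?_
  field_simp
  ring

/-- Asymptotic rays are nowhere further apart than at their origins: the distance between them is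
convex and bounded. -/
lemma CAT0.dist_le_of_asymptotic {X : Type*} [MetricSpace X] (hX : CAT0 X) {ξ ζ : ℝ → X}
    (hξ : IsGeodesicRay ξ) (hζ : IsGeodesicRay ζ) (has : Asymptotic ξ ζ) {s : ℝ} (hs : 0 ≤ s) :
    dist (ξ s) (ζ s) ≤ dist (ξ 0) (ζ 0) := by
  obtain ⟨C, hC⟩ := has
  have hC0 : 0 ≤ C := dist_nonneg.trans (hC 0 le_rfl)
  refine le_of_forall_pos_le_add fun e he => ?_
  obtain ⟨T, hT1, hT2⟩ : ∃ T : ℝ, s + 1 ≤ T ∧ s * C / e ≤ T :=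
    ⟨max (s + 1) (s * C / e), le_max_left _ _, le_max_right _ _⟩
  have hT : 0 < T := by linarith
  have hl : s / T ∈ Set.Icc (0 : ℝ) 1 := ⟨by positivity, (div_le_one hT).2 (by linarith)⟩
  have hl' : 1 - s / T ∈ Set.Icc (0 : ℝ) 1 := ⟨by linarith [hl.2], by linarith [hl.1]⟩
  -- `δ` is the diagonal of the quadrilateral spanned by the two rays up to time `T`.
  obtain ⟨δ, hδ⟩ := hX.1 (ξ 0) (ζ T)
  have h1 := hX.dist_le_mul (hξ.geodesic hT.le) hδ hl
  rw [hξ.dist_zero hT.le, div_mul_cancel₀ _ hT.ne'] at h1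
  have h2 := hX.dist_le_mul hδ.reverse (hζ.geodesic hT.le).reverse hl'
  rw [dist_comm (ζ T) (ζ 0), dist_comm (ζ T) (ξ 0), hζ.dist_zero hT.le] at h2
  rw [show dist (ξ 0) (ζ T) - (1 - s / T) * dist (ξ 0) (ζ T) = s / T * dist (ξ 0) (ζ T) by ring,
    show T - (1 - s / T) * T = s by field_simp; ring] at h2
  have h3 := dist_triangle (ξ s) (δ (s / T * dist (ξ 0) (ζ T))) (ζ s)
  have h4 : s / T * dist (ξ T) (ζ T) ≤ e := by
    refine (mul_le_mul_of_nonneg_left (hC T hT.le) hl.1).trans ?_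
    rw [div_mul_eq_mul_div, div_le_iff₀ hT]
    rw [div_le_iff₀ he] at hT2
    linarith
  have h5 := mul_le_of_le_one_left (dist_nonneg (x := ξ 0) (y := ζ 0)) hl'.2
  linarith

/-! ### Divergence of rays to distinct boundary points -/

/-- If the rays `c` and `ξ` from a common origin differ at time `t₀`, then a ray `η` asymptotic to
`ξ` and issuing from `c n`, with `n ≥ t₀`, leaves `c` at linear speed at least
`dist (c t₀) (ξ t₀) ^ 2 / (8 * t₀ ^ 2)`. -/
lemma CAT0.divergence {X : Type*} [MetricSpace X] (hX : CAT0 X) {c ξ η : ℝ → X}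
    (hc : IsGeodesicRay c) (hξ : IsGeodesicRay ξ) (hη : IsGeodesicRay η) (h0 : c 0 = ξ 0)
    {t₀ n s : ℝ} (ht₀ : 0 < t₀) (hne : 0 < dist (c t₀) (ξ t₀)) (hn : t₀ ≤ n) (hs : 0 < s)
    (hηc : η 0 = c n) (has : Asymptotic η ξ) :
    dist (c t₀) (ξ t₀) ^ 2 / (8 * t₀ ^ 2) * s ≤ dist (c (n + s)) (η s) := by
  obtain ⟨C, hC⟩ := has
  have hC0 : 0 ≤ C := dist_nonneg.trans (hC 0 le_rfl)
  set f := dist (c t₀) (ξ t₀)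
  obtain ⟨e, he⟩ : ∃ e, e = f ^ 2 / (8 * t₀ ^ 2) := ⟨_, rfl⟩
  have he0 : 0 < e := by rw [he]; positivity
  have hef : 8 * e * t₀ ^ 2 = f ^ 2 := by rw [he]; field_simp
  have hf2 : f ≤ 2 * t₀ := by
    have h1 := dist_triangle_left (c t₀) (ξ t₀) (c 0)
    rw [hc.dist_zero ht₀.le, h0, hξ.dist_zero ht₀.le] at h1
    linarith
  have he1 : e ≤ 1 / 2 := by
    rw [he, div_le_iff₀ (by positivity)]; nlinarith
  rw [← he]
  by_contra! hlt
  have hn0 : 0 < n := by linarith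
  obtain ⟨T, hT1, hT2, hT3⟩ : ∃ T : ℝ, s ≤ T ∧ t₀ ≤ T ∧ 2 * C / e ≤ T :=
    ⟨max s (max t₀ (2 * C / e)), le_max_left _ _, (le_max_left _ _).trans (le_max_right _ _),
      (le_max_right _ _).trans (le_max_right _ _)⟩
  have hT : 0 < T := by linarith
  rw [div_le_iff₀ he0] at hT3
  have hz : dist (c 0) (ξ T) = T := by rw [h0, hξ.dist_zero hT.le]
  -- Along `η` the distance to `ξ T` decreases at almost unit speed.
  have h1 := hX.convex_dist hη (ξ T) hs.le hT1 hT
  have h2 := hC T hT.le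
  have h3 : T - C ≤ dist (c n) (ξ T) := by
    have := dist_triangle_right (η 0) (η T) (ξ T)
    rw [hη.dist_zero hT.le, hηc] at this
    linarith
  rw [hηc] at h1
  have h4 : dist (η s) (ξ T) ≤ dist (c n) (ξ T) - s + e * s := by
    have : T * dist (η s) (ξ T) ≤ T * (dist (c n) (ξ T) - s + e * s) := by
      nlinarith [mul_le_mul_of_nonneg_left h2 hs.le, mul_le_mul_of_nonneg_left h3 hs.le,
        mul_le_mul_of_nonneg_left hT3 hs.le]
    exact le_of_mul_le_mul_left this hT
  have h5 : dist (c (n + s)) (ξ T) ≤ dist (c n) (ξ T) - s + 2 * e * s := by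
    linarith [dist_triangle (c (n + s)) (η s) (ξ T)]
  -- By convexity the same average speed holds on `[0, n]`, and then on `[0, t₀]`.
  have h6 := hX.convex_dist hc (ξ T) hn0.le (by linarith : n ≤ n + s) (by linarith)
  have h7 : dist (c n) (ξ T) ≤ T - n * (1 - 2 * e) := by
    have : s * dist (c n) (ξ T) ≤ s * (T - n * (1 - 2 * e)) := by
      rw [hz] at h6
      nlinarith [mul_le_mul_of_nonneg_left h5 hn0.le]
    exact le_of_mul_le_mul_left this hs
  have h8 := hX.convex_dist hc (ξ T) ht₀.le hn hn0
  have h9 : dist (c t₀) (ξ T) ≤ T - t₀ * (1 - 2 * e) := by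
    have : n * dist (c t₀) (ξ T) ≤ n * (T - t₀ * (1 - 2 * e)) := by
      rw [hz] at h8
      nlinarith [mul_le_mul_of_nonneg_left h7 ht₀.le]
    exact le_of_mul_le_mul_left this hn0
  have hξg := hξ.geodesic hT.le
  rw [← h0] at hξg
  have h10 := hX.dist_sq_le (hc.geodesic ht₀.le) hξg (l := 1) (m := t₀ / T) (by simp)
    ⟨by positivity, (div_le_one hT).2 hT2⟩
  rw [hz, hc.dist_zero ht₀.le, one_mul, div_mul_cancel₀ _ hT.ne'] at h10
  have h11 : dist (c t₀) (ξ T) ^ 2 ≤ (T - t₀ * (1 - 2 * e)) ^ 2 :=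
    pow_le_pow_left₀ dist_nonneg h9 2
  have h12 : f ^ 2 ≤ 4 * e * t₀ ^ 2 := by
    have h13 : t₀ / T * (t₀ ^ 2 + T ^ 2 - (T - t₀ * (1 - 2 * e)) ^ 2) ≤
        t₀ / T * (t₀ ^ 2 + T ^ 2 - dist (c t₀) (ξ T) ^ 2) := by gcongr
    have h14 : t₀ / T * (2 * T * t₀ * (1 - 2 * e)) ≤
        t₀ / T * (t₀ ^ 2 + T ^ 2 - (T - t₀ * (1 - 2 * e)) ^ 2) := by
      have : (1 - 2 * e) ^ 2 ≤ 1 := by nlinarith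
      refine mul_le_mul_of_nonneg_left ?_ (by positivity)
      nlinarith [mul_le_mul_of_nonneg_left this (sq_nonneg t₀)]
    have h15 : t₀ / T * (2 * T * t₀ * (1 - 2 * e)) = 2 * t₀ ^ 2 * (1 - 2 * e) := by
      field_simp
    have h16 : (t₀ / T) ^ 2 * T ^ 2 = t₀ ^ 2 := by field_simp
    change f ^ 2 ≤ _ at h10
    linarith
  have : 0 < e * t₀ ^ 2 := by positivity
  linarith

/-! ### The boundary metric -/

section bdist

variable {G X Bd : Type*} [Group G] [MetricSpace X] [MulAction G X] [MulAction G Bd]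

lemma hasSum_half_pow_succ : HasSum (fun i : ℕ => (1 : ℝ) / 2 ^ (i + 1)) 1 := by
  convert hasSum_geometric_two' 1 using 2 with i
  rw [pow_succ]
  field_simp

lemma summable_bdist (B : BoundaryStruct G X Bd) (x₀ : X) (α β : Bd) :
    Summable fun i : ℕ =>
      min (dist (B.ray x₀ α (i + 1)) (B.ray x₀ β (i + 1))) ((1 : ℝ) / 2 ^ (i + 1)) :=
  hasSum_half_pow_succ.summable.of_nonneg_of_le
    (fun _ => le_min dist_nonneg (by positivity)) fun _ => min_le_right _ _

lemma bdist_le_one (B : BoundaryStruct G X Bd) (x₀ : X) (α β : Bd) : bdist B x₀ α β ≤ 1 :=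
  ((summable_bdist B x₀ α β).tsum_le_tsum (fun _ => min_le_right _ _)
    hasSum_half_pow_succ.summable).trans_eq hasSum_half_pow_succ.tsum_eq

lemma le_bdist (B : BoundaryStruct G X Bd) (x₀ : X) (α β : Bd) (k : ℕ)
    (h : 1 ≤ dist (B.ray x₀ α (k + 1)) (B.ray x₀ β (k + 1))) :
    (1 : ℝ) / 2 ^ (k + 1) ≤ bdist B x₀ α β := by
  refine le_trans (le_min (le_trans ?_ h) le_rfl)
    ((summable_bdist B x₀ α β).le_tsum k fun _ _ => le_min dist_nonneg (by positivity))
  rw [div_le_one (by positivity)]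
  exact one_le_pow₀ (by norm_num)

end bdist

/-- Theorem 3.1 / Theorem 1.1. If a group `G` acts geometrically on a
CAT(0) space `X` with basepoint `x₀` and `|∂X| > 2`, then for all `α ≠ β` in `∂X`,
`limsup { d_{∂X}(gα, gβ) : g ∈ G } > 0`. -/
theorem limsup_pos_of_geometric_action {G X Bd : Type*} [Group G] [MetricSpace X]
    [MulAction G X] [MulAction G Bd]
    (hCAT : CAT0 X) (hgeo : GeometricAction G X)
    (B : BoundaryStruct G X Bd) (x₀ : X) (hcard : MoreThanTwo Bd) :
    ∀ α β : Bd, α ≠ β →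
      0 < Filter.limsup (fun g : G => bdist B x₀ (g • α) (g • β)) Filter.cofinite := by
  intro α β hαβ
  obtain ⟨hiso, -, hcoc⟩ := hgeo
  obtain ⟨R, hR, hcov⟩ := hcoc x₀
  have hcα := B.isRay x₀ α
  have h00 : B.ray x₀ α 0 = B.ray x₀ β 0 := by rw [B.ray_start, B.ray_start]
  obtain ⟨t₀, ht₀, hne⟩ : ∃ t₀ : ℝ, 0 < t₀ ∧ 0 < dist (B.ray x₀ α t₀) (B.ray x₀ β t₀) := by
    by_contra! hcon
    refine hαβ (B.ray_inj x₀ α β ⟨0, fun t ht => ?_⟩)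
    rcases ht.eq_or_lt with rfl | ht
    · rw [h00, dist_self]
    · exact hcon t ht
  set e := dist (B.ray x₀ α t₀) (B.ray x₀ β t₀) ^ 2 / (8 * t₀ ^ 2) with he
  have he0 : 0 < e := by positivity
  obtain ⟨k, hk⟩ := exists_nat_ge ((1 + 2 * R) / e)
  rw [div_le_iff₀ he0] at hk
  have hk0 : (0 : ℝ) < (k : ℝ) + 1 := by positivity
  have main : ∀ n : ℝ, t₀ ≤ n → ∀ g : G, dist (B.ray x₀ α n) (g • x₀) ≤ R →
      (1 : ℝ) / 2 ^ (k + 1) ≤ bdist B x₀ (g⁻¹ • α) (g⁻¹ • β) := by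
    intro n hn g hg
    have hn0 : 0 ≤ n := by linarith
    apply le_bdist
    have hray : ∀ γ : Bd, B.ray x₀ (g⁻¹ • γ) (k + 1) = g⁻¹ • B.ray (g • x₀) γ (k + 1) := by
      intro γ
      rw [B.equivariant, inv_smul_smul]
    rw [hray, hray, hiso]
    have hdiv := hCAT.divergence hcα (B.isRay x₀ β) (B.isRay (B.ray x₀ α n) β) h00 ht₀ hne hn hk0
      (B.ray_start _ _) (B.ray_asymp _ _ _)
    have hα : dist (B.ray x₀ α (n + (k + 1))) (B.ray (g • x₀) α (k + 1)) ≤ R := by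
      have hshift : IsGeodesicRay fun t => B.ray x₀ α (n + t) := by
        intro s hs t ht
        rw [Set.mem_Ici] at hs ht
        rw [hcα _ (Set.mem_Ici.2 (by linarith)) _ (Set.mem_Ici.2 (by linarith))]
        congr 1
        ring
      obtain ⟨C, hC⟩ := B.ray_asymp x₀ (g • x₀) α
      have has : Asymptotic (fun t => B.ray x₀ α (n + t)) (B.ray (g • x₀) α) := by
        refine ⟨n + C, fun t ht => (dist_triangle _ (B.ray x₀ α t) _).trans
          (add_le_add ?_ (hC t ht))⟩
        rw [hcα _ (Set.mem_Ici.2 (by linarith)) _ ht, add_sub_cancel_right, abs_of_nonneg hn0]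
      refine (hCAT.dist_le_of_asymptotic hshift (B.isRay _ _) has hk0.le).trans ?_
      rw [B.ray_start, add_zero]
      exact hg
    have hβ : dist (B.ray (B.ray x₀ α n) β (k + 1)) (B.ray (g • x₀) β (k + 1)) ≤ R := by
      refine (hCAT.dist_le_of_asymptotic (B.isRay _ _) (B.isRay _ _) (B.ray_asymp _ _ _)
        hk0.le).trans ?_
      rw [B.ray_start, B.ray_start]
      exact hg
    have h4 := dist_triangle4 (B.ray x₀ α (n + (k + 1))) (B.ray (g • x₀) α (k + 1))
      (B.ray (g • x₀) β (k + 1)) (B.ray (B.ray x₀ α n) β (k + 1))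
    rw [dist_comm (B.ray (g • x₀) β (k + 1))] at h4
    rw [← he] at hdiv
    nlinarith
  refine lt_of_lt_of_le (by positivity : (0 : ℝ) < 1 / 2 ^ (k + 1))
    (Filter.le_limsup_of_frequently_le ?_ ?_)
  · rw [Filter.frequently_cofinite_iff_infinite]
    intro hfin
    obtain ⟨M, hM⟩ := (hfin.image fun g : G => dist x₀ (g⁻¹ • x₀)).bddAbove
    -- A single orbit point cannot be near `c n` for `n > M + R`.
    obtain ⟨n, hn1, hn2⟩ : ∃ n : ℝ, t₀ ≤ n ∧ M + R + 1 ≤ n :=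
      ⟨max t₀ (M + R + 1), le_max_left _ _, le_max_right _ _⟩
    obtain ⟨g, hg⟩ := hcov (B.ray x₀ α n)
    have h1 := hM ⟨g⁻¹, main n hn1 g hg, rfl⟩
    simp only [inv_inv] at h1
    have h2 := hcα.dist_zero (ht₀.le.trans hn1)
    rw [B.ray_start] at h2
    have h3 := dist_triangle_right x₀ (B.ray x₀ α n) (g • x₀)
    linarith
  · exact Filter.isBoundedUnder_of ⟨1, fun g => bdist_le_one B x₀ _ _⟩
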